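/- arXiv:2005.02945 — 5 statements merged into one kernel-verified Lean document; each statement's English description precedes it below -/
import Mathlib

section
/- Fix integers r ≥ 3 and n ≥ 1. For all positive integers q, d with q ≥ 2d and q/d < r, one has α(C_{d,q}^{⊠n}) ≤ (1 + rⁿ(r−2))/(r−1); that is, every set S ⊆ (ℤ/qℤ)ⁿ that is independent in C_{d,q}^{⊠n} has cardinality at most (1 + rⁿ(r−2))/(r−1). -/
/-- The circular (Lee) distance on `ℤ/qℤ`: `δ(x,y) = min(|x-y|, q-|x-y|)`,
with representatives taken in `{0,…,q-1}`. -/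
def circDist (q : ℕ) (x y : ZMod q) : ℕ := min (x - y).val (y - x).val

/-- The sequence `(1 + rⁿ(r-2))/(r-1)`, by its recurrence. -/
def ubSeq (r : ℕ) : ℕ → ℕ
  | 0 => 1
  | n + 1 => r * ubSeq r n - 1

lemma ubSeq_pos (r : ℕ) (hr : 3 ≤ r) (n : ℕ) : 0 < ubSeq r n := by
  induction n with
  | zero => simp [ubSeq]
  | succ k ih =>
    simp only [ubSeq]
    have : 3 * 1 ≤ r * ubSeq r k := Nat.mul_le_mul hr ih
    omega

lemma ubSeq_eq (r : ℕ) (hr : 3 ≤ r) (n : ℕ) :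
    (r - 1) * ubSeq r n = 1 + r ^ n * (r - 2) := by
  obtain ⟨s, rfl⟩ : ∃ s, r = s + 2 := ⟨r - 2, by omega⟩
  induction n with
  | zero => simp [ubSeq]; omega
  | succ k ih =>
    have hp := ubSeq_pos (s + 2) hr k
    have h1 : ubSeq (s + 2) (k + 1) + 1 = (s + 2) * ubSeq (s + 2) k := by
      simp only [ubSeq]
      exact Nat.sub_add_cancel (Nat.mul_pos (by omega) hp)
    have e1 : s + 2 - 1 = s + 1 := by omega
    have e2 : s + 2 - 2 = s := by omega
    rw [e1, e2] at ih ⊢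
    have h2 : (s + 1) * (ubSeq (s + 2) (k + 1) + 1) = (s + 2) * (1 + (s + 2) ^ k * s) := by
      rw [h1, ← ih]; ring
    have h3 : (s + 2) ^ (k + 1) = (s + 2) ^ k * (s + 2) := pow_succ _ _
    rw [h3]
    nlinarith

lemma circDist_lt_of_window (q d : ℕ) [NeZero q] (x y t : ZMod q)
    (hx : (x - t).val < d) (hy : (y - t).val < d) : circDist q x y < d := by
  unfold circDist
  rcases le_total (x - t).val (y - t).val with h | h
  · have := ZMod.val_sub h
    rw [sub_sub_sub_cancel_right] at this
    omega
  · have := ZMod.val_sub h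
    rw [sub_sub_sub_cancel_right] at this
    omega

lemma window_count (q d : ℕ) [NeZero q] (hdq : d ≤ q) (x : ZMod q) :
    d ≤ (Finset.univ.filter (fun t : ZMod q => (x - t).val < d)).card := by
  have hinj : Set.InjOn (fun k : ℕ => x - (k : ZMod q)) (Finset.range d : Set ℕ) := by
    intro a ha b hb hab
    simp only [Finset.coe_range, Set.mem_Iio] at ha hb
    have h : (a : ZMod q) = b := sub_right_injective hab
    have := congrArg ZMod.val h
    rwa [ZMod.val_natCast_of_lt (by omega), ZMod.val_natCast_of_lt (by omega)] at this
  calc d = ((Finset.range d).image (fun k : ℕ => x - (k : ZMod q))).card := by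
        rw [Finset.card_image_of_injOn hinj, Finset.card_range]
    _ ≤ _ := by
        apply Finset.card_le_card
        intro t ht
        obtain ⟨k, hk, rfl⟩ := Finset.mem_image.1 ht
        have hk' := Finset.mem_range.1 hk
        simp only [Finset.mem_filter, Finset.mem_univ, true_and, sub_sub_cancel]
        rwa [ZMod.val_natCast_of_lt (by omega)]

lemma card_le_ubSeq (r : ℕ) (hr : 3 ≤ r) (q d : ℕ) [NeZero q] (hd : 0 < d) (hdq : d ≤ q)
    (hqd : q < r * d) (n : ℕ) : ∀ (S : Finset (Fin n → ZMod q))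
    (_ : ∀ u ∈ S, ∀ v ∈ S, u ≠ v → ∃ i : Fin n, d ≤ circDist q (u i) (v i)),
    S.card ≤ ubSeq r n := by
  induction n with
  | zero =>
    intro S _
    simp only [ubSeq]
    exact Finset.card_le_one.2 fun a _ b _ => Subsingleton.elim _ _
  | succ n ih =>
    intro S hS
    classical
    have key : ∀ t : ZMod q, (S.filter (fun u => (u 0 - t).val < d)).card ≤ ubSeq r n := by
      intro t
      have sep : ∀ u ∈ S.filter (fun u => (u 0 - t).val < d),
          ∀ v ∈ S.filter (fun u => (u 0 - t).val < d), u ≠ v →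
          ∃ i : Fin n, d ≤ circDist q (Fin.tail u i) (Fin.tail v i) := by
        intro u hu v hv huv
        rw [Finset.mem_filter] at hu hv
        obtain ⟨i, hi⟩ := hS u hu.1 v hv.1 huv
        have h0 := circDist_lt_of_window q d _ _ t hu.2 hv.2
        induction i using Fin.cases with
        | zero => omega
        | succ j => exact ⟨j, hi⟩
      have hinj : Set.InjOn (fun u : Fin (n + 1) → ZMod q => Fin.tail u)
          (S.filter (fun u => (u 0 - t).val < d) : Set (Fin (n + 1) → ZMod q)) := by
        intro u hu v hv huv
        by_contra hne
        obtain ⟨i, hi⟩ := sep u hu v hv hne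
        have huv' : Fin.tail u = Fin.tail v := huv
        rw [huv'] at hi
        simp [circDist] at hi
        omega
      rw [← Finset.card_image_of_injOn hinj]
      apply ih
      intro a ha b hb hab
      obtain ⟨u, hu, rfl⟩ := Finset.mem_image.1 ha
      obtain ⟨v, hv, rfl⟩ := Finset.mem_image.1 hb
      exact sep u hu v hv (fun h => hab (by rw [h]))
    have hcount : S.card * d ≤ q * ubSeq r n := by
      calc S.card * d = ∑ _u ∈ S, d := by simp
        _ ≤ ∑ u ∈ S, (Finset.univ.filter (fun t : ZMod q => (u 0 - t).val < d)).card :=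
            Finset.sum_le_sum fun u _ => window_count q d hdq (u 0)
        _ = ∑ t : ZMod q, (S.filter (fun u => (u 0 - t).val < d)).card := by
            simp only [Finset.card_filter]
            exact Finset.sum_comm
        _ ≤ ∑ _t : ZMod q, ubSeq r n := Finset.sum_le_sum fun t _ => key t
        _ = q * ubSeq r n := by simp [ZMod.card]
    have hlt : S.card * d < (r * ubSeq r n) * d := by
      calc S.card * d ≤ q * ubSeq r n := hcount
        _ < (r * d) * ubSeq r n := Nat.mul_lt_mul_of_pos_right hqd (ubSeq_pos r hr n)
        _ = _ := by ring
    have := Nat.lt_of_mul_lt_mul_right hlt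
    simp only [ubSeq]
    omega

/-- Upper bound: for integers `r ≥ 3`, `n ≥ 1` and positive integers `q, d` with
`q ≥ 2d` and `q/d < r`, every independent set in `C_{d,q}^{⊠n}` has cardinality
at most `(1 + rⁿ(r-2))/(r-1)`. -/
theorem alpha_circular_power_upper_bound (r n : ℕ) (hr : 3 ≤ r) (hn : 0 < n)
    (q d : ℕ) (hd : 0 < d) (h2d : 2 * d ≤ q) (hqd : q < r * d)
    (S : Finset (Fin n → ZMod q))
    (hS : ∀ u ∈ S, ∀ v ∈ S, u ≠ v → ∃ i : Fin n, d ≤ circDist q (u i) (v i)) :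
    S.card ≤ (1 + r ^ n * (r - 2)) / (r - 1) := by
  haveI : NeZero q := ⟨by omega⟩
  rw [← ubSeq_eq r hr n, Nat.mul_div_cancel_left _ (by omega)]
  exact card_le_ubSeq r hr q d hd (by omega) hqd n S hS
end

section
/- Fix integers r ≥ 3 and n ≥ 1, and let q_n = (1 + rⁿ(r−2))/(r−1) and q_{n−1} = (1 + r^{n−1}(r−2))/(r−1). If B ⊆ (ℤ/q_nℤ)ⁿ is an independent set in C_{q_{n−1}, q_n}^{⊠n} with |B| = q_n, then for every coordinate j ∈ {1, …, n} and every symbol s ∈ ℤ/q_nℤ there is exactly one word of B whose j-th coordinate equals s. -/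
/-- The sequence `q_k`, defined recursively. -/
def qSeq (r : ℕ) : ℕ → ℕ
  | 0 => 1
  | k + 1 => r * qSeq r k - 1

lemma qSeq_pos (r : ℕ) (hr : 3 ≤ r) (k : ℕ) : 1 ≤ qSeq r k := by
  induction k with
  | zero => simp [qSeq]
  | succ k ih =>
    have : 3 * 1 ≤ r * qSeq r k := Nat.mul_le_mul hr ih
    simp only [qSeq]; omega

lemma qSeq_succ (r : ℕ) (hr : 3 ≤ r) (k : ℕ) : qSeq r (k + 1) + 1 = r * qSeq r k := by
  have : 3 * 1 ≤ r * qSeq r k := Nat.mul_le_mul hr (qSeq_pos r hr k)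
  simp only [qSeq]; omega

lemma qSeq_mono (r : ℕ) (hr : 3 ≤ r) : Monotone (qSeq r) := by
  refine monotone_nat_of_le_succ fun k => ?_
  have h1 := qSeq_pos r hr k
  have h2 := qSeq_succ r hr k
  nlinarith

lemma qSeq_closed (r : ℕ) (hr : 3 ≤ r) (k : ℕ) :
    (1 + r ^ k * (r - 2)) / (r - 1) = qSeq r k := by
  obtain ⟨t, rfl⟩ : ∃ t, r = t + 2 := ⟨r - 2, by omega⟩
  have e1 : t + 2 - 2 = t := by omega
  have e2 : t + 2 - 1 = t + 1 := by omega
  rw [e1, e2]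
  apply Nat.div_eq_of_eq_mul_left (by omega)
  induction k with
  | zero => simp [qSeq]; ring
  | succ k ih =>
    have h2 := qSeq_succ (t + 2) hr k
    have : qSeq (t + 2) (k + 1) * (t + 1) + (t + 1) = (t + 2) * (1 + (t + 2) ^ k * t) := by
      rw [ih]; linear_combination (t + 1) * h2
    have h3 : (t + 2) ^ (k + 1) * t = (t + 2) * ((t + 2) ^ k * t) := by ring
    rw [h3]
    linarith

/-- Independence at distance `d`. -/
def Indep (q d : ℕ) {m : ℕ} (B : Finset (Fin m → ZMod q)) : Prop :=
  ∀ u ∈ B, ∀ v ∈ B, u ≠ v → ∃ i : Fin m, d ≤ circDist q (u i) (v i)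

lemma circDist_window {q d : ℕ} [NeZero q] (a x y : ZMod q)
    (hx : (x - a).val < d) (hy : (y - a).val < d) : circDist q x y < d := by
  unfold circDist
  rcases le_total (x - a).val (y - a).val with h | h
  · have := ZMod.val_sub h
    rw [sub_sub_sub_cancel_right] at this
    omega
  · have := ZMod.val_sub h
    rw [sub_sub_sub_cancel_right] at this
    omega

lemma sum_window {q d : ℕ} [NeZero q] (hdq : d ≤ q) (a x : ZMod q) :
    (∑ i ∈ Finset.range d, if x = a + (i : ZMod q) then 1 else 0)
      = if (x - a).val < d then 1 else 0 := by
  have key : ∀ i ∈ Finset.range d, (x = a + (i : ZMod q) ↔ (x - a).val = i) := by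
    intro i hi
    have hi := Finset.mem_range.1 hi
    constructor
    · rintro rfl
      rw [add_sub_cancel_left, ZMod.val_natCast, Nat.mod_eq_of_lt (by omega)]
    · intro h
      rw [← h, ZMod.natCast_zmod_val]; ring
  rw [Finset.sum_congr rfl (fun i hi => if_congr (key i hi) rfl rfl)]
  simp

/-- Number of words with symbol `s` in coordinate `j`. -/
def cnt {q m : ℕ} (B : Finset (Fin m → ZMod q)) (j : Fin m) (s : ZMod q) : ℕ :=
  (B.filter (fun w => w j = s)).card

lemma window_card {q d m : ℕ} [NeZero q] (hdq : d ≤ q) (B : Finset (Fin m → ZMod q))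
    (j : Fin m) (a : ZMod q) :
    ∑ i ∈ Finset.range d, cnt B j (a + (i : ZMod q))
      = (B.filter (fun w => (w j - a).val < d)).card := by
  simp only [cnt, Finset.card_filter]
  rw [Finset.sum_comm]
  exact Finset.sum_congr rfl fun w _ => sum_window hdq a (w j)

lemma sum_cnt {q m : ℕ} [NeZero q] (B : Finset (Fin m → ZMod q)) (j : Fin m) :
    ∑ a : ZMod q, cnt B j a = B.card := by
  simp only [cnt]
  exact (Finset.card_eq_sum_card_fiberwise (fun _ _ => Finset.mem_coe.2 (Finset.mem_univ _))).symm

lemma sum_windows {q d m : ℕ} [NeZero q] (B : Finset (Fin m → ZMod q)) (j : Fin m) :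
    ∑ a : ZMod q, ∑ i ∈ Finset.range d, cnt B j (a + (i : ZMod q)) = d * B.card := by
  rw [Finset.sum_comm]
  have : ∀ i ∈ Finset.range d, ∑ a : ZMod q, cnt B j (a + (i : ZMod q)) = B.card := by
    intro i _
    rw [← sum_cnt B j]
    exact Equiv.sum_comp (Equiv.addRight (i : ZMod q)) (cnt B j)
  rw [Finset.sum_congr rfl this]
  simp

lemma window_le {q d m K : ℕ} [NeZero q] (hdq : d ≤ q)
    (hK : ∀ C : Finset (Fin m → ZMod q), Indep q d C → C.card ≤ K)
    (B : Finset (Fin (m + 1) → ZMod q)) (hB : Indep q d B) (j : Fin (m + 1)) (a : ZMod q) :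
    ∑ i ∈ Finset.range d, cnt B j (a + (i : ZMod q)) ≤ K := by
  classical
  rw [window_card hdq]
  set W := B.filter (fun w => (w j - a).val < d) with hW
  have sep : ∀ u ∈ W, ∀ v ∈ W, u ≠ v →
      ∃ i : Fin m, d ≤ circDist q (u (j.succAbove i)) (v (j.succAbove i)) := by
    intro u hu v hv huv
    rw [hW, Finset.mem_filter] at hu hv
    obtain ⟨i, hi⟩ := hB u hu.1 v hv.1 huv
    have hij : i ≠ j := by
      rintro rfl
      have := circDist_window a _ _ hu.2 hv.2
      omega
    obtain ⟨i', rfl⟩ := Fin.exists_succAbove_eq hij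
    exact ⟨i', hi⟩
  have hinj : Set.InjOn (fun (w : Fin (m + 1) → ZMod q) (i : Fin m) => w (j.succAbove i)) W := by
    intro u hu v hv huv
    by_contra hne
    obtain ⟨i, hi⟩ := sep u hu v hv hne
    have e : u (j.succAbove i) = v (j.succAbove i) := congrFun huv i
    have hu2 := (Finset.mem_filter.1 (Finset.mem_coe.1 hu)).2
    rw [e] at hi
    simp [circDist] at hi
    omega
  rw [← Finset.card_image_of_injOn hinj]
  apply hK
  intro u hu v hv huv
  obtain ⟨u', hu', rfl⟩ := Finset.mem_image.1 hu
  obtain ⟨v', hv', rfl⟩ := Finset.mem_image.1 hv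
  exact sep u' hu' v' hv' (fun h => huv (by rw [h]))

lemma indep_bound (r n : ℕ) (hr : 3 ≤ r) (q d : ℕ) [NeZero q] (hd : d = qSeq r n)
    (hq : q = qSeq r (n + 1)) (m : ℕ) (hm : m ≤ n) :
    ∀ C : Finset (Fin m → ZMod q), Indep q d C → C.card ≤ qSeq r m := by
  induction m with
  | zero =>
    intro C _
    simpa [qSeq] using Finset.card_le_one_of_subsingleton C
  | succ m ih =>
    intro C hC
    have hdq : d ≤ q := by rw [hd, hq]; exact qSeq_mono r hr (by omega)
    have h1 : d * C.card ≤ q * qSeq r m := by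
      rw [← sum_windows C 0]
      refine (Finset.sum_le_sum fun a _ => window_le hdq (ih (by omega)) C hC 0 a).trans ?_
      simp [ZMod.card]
    have h2 := qSeq_succ r hr n
    have h3 := qSeq_succ r hr m
    have h4 := qSeq_pos r hr m
    rw [← hd, ← hq] at h2
    have h5 : d * C.card < d * (r * qSeq r m) := by
      have : d * (r * qSeq r m) = (q + 1) * qSeq r m := by rw [h2]; ring
      rw [this, add_mul]; omega
    have := Nat.lt_of_mul_lt_mul_left h5
    omega

/-- For integers `r ≥ 3`, `n ≥ 1` and `q_k := (1 + r^k(r-2))/(r-1)`, every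
independent set `B` of cardinality `q_n` in `C_{q_{n-1},q_n}^{⊠n}` contains each
symbol of `ℤ/q_nℤ` exactly once in each coordinate. -/
theorem symbols_appear_once (r n : ℕ) (hr : 3 ≤ r) (hn : 0 < n)
    (qn qn1 : ℕ)
    (hqn : qn = (1 + r ^ n * (r - 2)) / (r - 1))
    (hqn1 : qn1 = (1 + r ^ (n - 1) * (r - 2)) / (r - 1))
    (B : Finset (Fin n → ZMod qn)) (hBcard : B.card = qn)
    (hB : ∀ u ∈ B, ∀ v ∈ B, u ≠ v → ∃ i : Fin n, qn1 ≤ circDist qn (u i) (v i)) :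
    ∀ j : Fin n, ∀ s : ZMod qn, (B.filter (fun w => w j = s)).card = 1 := by
  obtain ⟨m, rfl⟩ : ∃ m, n = m + 1 := ⟨n - 1, by omega⟩
  rw [qSeq_closed r hr] at hqn hqn1
  simp only [Nat.add_sub_cancel] at hqn1
  have hqpos : 1 ≤ qn := hqn ▸ qSeq_pos r hr _
  haveI : NeZero qn := ⟨by omega⟩
  have hdq : qn1 ≤ qn := by rw [hqn1, hqn]; exact qSeq_mono r hr (by omega)
  have hrel := qSeq_succ r hr m
  rw [← hqn, ← hqn1] at hrel
  intro j
  have hle : ∀ a ∈ (Finset.univ : Finset (ZMod qn)),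
      ∑ i ∈ Finset.range qn1, cnt B j (a + (i : ZMod qn)) ≤ qn1 := fun a _ =>
    window_le hdq (by
      have := indep_bound r m hr qn qn1 hqn1 hqn m le_rfl
      rwa [← hqn1] at this) B hB j a
  have hsum : ∑ a : ZMod qn, ∑ i ∈ Finset.range qn1, cnt B j (a + (i : ZMod qn))
      = ∑ a : ZMod qn, qn1 := by
    rw [sum_windows, hBcard]; simp [ZMod.card, mul_comm]
  have heq := (Finset.sum_eq_sum_iff_of_le hle).1 hsum
  have hper : ∀ a : ZMod qn, cnt B j (a + (qn1 : ZMod qn)) = cnt B j a := by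
    intro a
    have e1 := heq a (Finset.mem_univ _)
    have e2 := heq (a + 1) (Finset.mem_univ _)
    have e3 := Finset.sum_range_succ (fun i : ℕ => cnt B j (a + (i : ZMod qn))) qn1
    rw [Finset.sum_range_succ'] at e3
    have e4 : ∑ i ∈ Finset.range qn1, cnt B j (a + ((i + 1 : ℕ) : ZMod qn))
        = ∑ i ∈ Finset.range qn1, cnt B j (a + 1 + (i : ZMod qn)) := by
      refine Finset.sum_congr rfl fun i _ => ?_
      congr 1; push_cast; ring
    rw [e4, e1, e2] at e3
    simp only [Nat.cast_zero, add_zero] at e3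
    omega
  have hperk : ∀ (k : ℕ) (a : ZMod qn), cnt B j (a + (k : ZMod qn) * (qn1 : ZMod qn)) = cnt B j a := by
    intro k
    induction k with
    | zero => intro a; simp
    | succ k ih =>
      intro a
      rw [← ih a, ← hper (a + (k : ZMod qn) * (qn1 : ZMod qn))]
      congr 1; push_cast; ring
  have hone : (r : ZMod qn) * (qn1 : ZMod qn) = 1 := by
    have := congrArg (Nat.cast : ℕ → ZMod qn) hrel
    push_cast at this
    rw [← this]; simp
  have hconst : ∀ s : ZMod qn, cnt B j s = cnt B j 0 := by
    intro s
    have := hperk (s.val * r) 0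
    rw [← this]
    congr 1
    push_cast
    rw [mul_assoc, hone, ZMod.natCast_zmod_val]; ring
  have htot := sum_cnt B j
  rw [Finset.sum_congr rfl (fun s _ => hconst s), hBcard] at htot
  simp only [Finset.sum_const, Finset.card_univ, ZMod.card, smul_eq_mul] at htot
  intro s
  change cnt B j s = 1
  rw [hconst s]
  exact Nat.eq_of_mul_eq_mul_left hqpos (by omega)
end

section
/- The set S := { t·(1, 7, 49, 343, 2401) : t ∈ ℤ/382ℤ } ⊆ (ℤ/382ℤ)⁵ (entries taken modulo 382) is an independent set of cardinality 382 in C_{108,382}^{⊠5}; equivalently, for all distinct s, t ∈ ℤ/382ℤ there exists i ∈ {0, 1, 2, 3, 4} such that δ(7ⁱ·s, 7ⁱ·t) ≥ 108 modulo 382. -/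
theorem nat_check : ∀ n ∈ List.range 382, n = 0 ∨ ∃ i : Fin 5,
    108 ≤ (7 ^ (i : ℕ) * n) % 382 ∧ (7 ^ (i : ℕ) * n) % 382 ≤ 274 := by
  decide +kernel

theorem diff_check (s t : ZMod 382) (h : s ≠ t) :
    ∃ i : Fin 5, 108 ≤ circDist 382 ((7 : ZMod 382) ^ (i : ℕ) * s)
      ((7 : ZMod 382) ^ (i : ℕ) * t) := by
  have hlt : (s - t).val < 382 := ZMod.val_lt _
  rcases nat_check (s - t).val (List.mem_range.2 hlt) with h0 | ⟨i, h1, h2⟩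
  · exact absurd (sub_eq_zero.1 ((ZMod.val_eq_zero _).1 h0)) h
  · refine ⟨i, ?_⟩
    have e : (7 : ZMod 382) ^ (i : ℕ) * s - (7 : ZMod 382) ^ (i : ℕ) * t
        = ((7 ^ (i : ℕ) * (s - t).val : ℕ) : ZMod 382) := by
      rw [Nat.cast_mul, ZMod.natCast_zmod_val]
      push_cast
      ring
    have e2 : ((7 : ZMod 382) ^ (i : ℕ) * s - (7 : ZMod 382) ^ (i : ℕ) * t).val
        = (7 ^ (i : ℕ) * (s - t).val) % 382 := by
      rw [e, ZMod.val_natCast]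
    unfold circDist
    rw [← neg_sub ((7 : ZMod 382) ^ (i : ℕ) * s), ZMod.neg_val', e2]
    generalize (7 ^ (i : ℕ) * (s - t).val) % 382 = m at h1 h2
    rw [Nat.mod_eq_of_lt (by omega)]
    exact le_min h1 (by omega)

/-- The set `S = { t·(1,7,49,343,2401) : t ∈ ℤ/382ℤ }` is an independent set of
cardinality 382 in `C_{108,382}^{⊠5}`; equivalently, for all distinct
`s, t ∈ ℤ/382ℤ` there is an `i ∈ {0,…,4}` with `δ(7ⁱ·s, 7ⁱ·t) ≥ 108`. -/
theorem independent_set_382 :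
    (Finset.image (fun t : ZMod 382 => fun i : Fin 5 => t * (7 : ZMod 382) ^ (i : ℕ))
        Finset.univ).card = 382
    ∧ (∀ u ∈ Finset.image (fun t : ZMod 382 => fun i : Fin 5 => t * (7 : ZMod 382) ^ (i : ℕ))
          Finset.univ,
       ∀ v ∈ Finset.image (fun t : ZMod 382 => fun i : Fin 5 => t * (7 : ZMod 382) ^ (i : ℕ))
          Finset.univ,
        u ≠ v → ∃ i : Fin 5, 108 ≤ circDist 382 (u i) (v i))
    ∧ ∀ s t : ZMod 382, s ≠ t →
        ∃ i : Fin 5, 108 ≤ circDist 382 ((7 : ZMod 382) ^ (i : ℕ) * s)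
          ((7 : ZMod 382) ^ (i : ℕ) * t) := by
  refine ⟨?_, ?_, diff_check⟩
  · rw [Finset.card_image_of_injective, Finset.card_univ, ZMod.card]
    intro a b hab
    have := congrFun hab 0
    simpa using this
  · intro u hu v hv huv
    obtain ⟨s, -, rfl⟩ := Finset.mem_image.1 hu
    obtain ⟨t, -, rfl⟩ := Finset.mem_image.1 hv
    have hst : s ≠ t := by
      rintro rfl
      exact huv rfl
    obtain ⟨i, hi⟩ := diff_check s t hst
    refine ⟨i, ?_⟩
    simpa only [mul_comm] using hi
end

section
/- α(C₇^{⊠5}) ≥ 367: there exists a set S ⊆ (ℤ/7ℤ)⁵ of cardinality 367 such that for all distinct u, v ∈ S there is a coordinate i with δ(u_i, v_i) ≥ 2 (i.e., S is independent in C₇^{⊠5}, where C₇ = C_{2,7} is the 7-cycle). Consequently, the Shannon capacity satisfies Θ(C₇) ≥ 367^{1/5}. -/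
/-- `α(C_{d,q}^{⊠n})`: the maximum cardinality of a set `S ⊆ (ℤ/qℤ)ⁿ` such that any
two distinct elements of `S` differ by at least `d` in circular distance in some
coordinate. -/
noncomputable def circAlpha (q d n : ℕ) : ℕ :=
  sSup {k : ℕ | ∃ S : Finset (Fin n → ZMod q),
    (∀ u ∈ S, ∀ v ∈ S, u ≠ v → ∃ i : Fin n, d ≤ circDist q (u i) (v i)) ∧ S.card = k}

/-- The Shannon capacity `Θ(C_{d,q}) = sup_{n ≥ 1} α(C_{d,q}^{⊠n})^{1/n}`. -/
noncomputable def circTheta (q d : ℕ) : ℝ :=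
  ⨆ n : ℕ, (circAlpha q d (n + 1) : ℝ) ^ (((n : ℝ) + 1)⁻¹)

namespace C7

/-- The words of the independent set, written in base 7. -/
def words : List ℕ :=
  [
   26, 50, 118, 191, 203, 277, 290, 301, 367, 427, 445, 519, 586, 618, 685, 694, 762, 786, 847,
   914, 927, 946, 1013, 1071, 1089, 1163, 1181, 1255, 1280, 1354, 1406, 1430, 1491, 1522, 1558,
   1583, 1657, 1682, 1734, 1807, 1899, 1924, 1998, 2009, 2099, 2124, 2184, 2216, 2251, 2276,
   2350, 2375, 2422, 2487, 2489, 2514, 2579, 2581, 2606, 2680, 2704, 2756, 2848, 2909, 2982,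
   3008, 3081, 3133, 3158, 3223, 3225, 3250, 3317, 3349, 3409, 3474, 3492, 3553, 3577, 3645,
   3676, 3744, 3802, 3869, 3894, 3961, 3986, 4053, 4071, 4130, 4203, 4221, 4289, 4313, 4388,
   4412, 4511, 4513, 4654, 4715, 4789, 4809, 4877, 4901, 4969, 5042, 5061, 5128, 5141, 5193,
   5204, 5218, 5278, 5296, 5370, 5395, 5469, 5521, 5545, 5613, 5637, 5698, 5736, 5772, 5797,
   5849, 5862, 5922, 5940, 6014, 6032, 6113, 6131, 6190, 6257, 6281, 6342, 6373, 6409, 6508,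
   6517, 6585, 6658, 6676, 6750, 6775, 6784, 6836, 6849, 6883, 6950, 6975, 7035, 7102, 7201,
   7246, 7264, 7338, 7356, 7417, 7430, 7448, 7516, 7574, 7641, 7666, 7733, 7758, 7832, 7857,
   7909, 7982, 8000, 8061, 8074, 8085, 8160, 8184, 8236, 8310, 8377, 8402, 8469, 8501, 8561,
   8577, 8638, 8705, 8718, 8729, 8828, 8896, 8954, 8972, 9046, 9113, 9138, 9205, 9223, 9270,
   9331, 9362, 9398, 9423, 9490, 9515, 9589, 9634, 9701, 9726, 9786, 9804, 9885, 9903, 9962,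
   10029, 10054, 10121, 10145, 10213, 10244, 10280, 10296, 10357, 10370, 10430, 10448, 10522,
   10547, 10621, 10673, 10698, 10765, 10789, 10850, 10888, 10924, 10949, 11001, 11014, 11025,
   11093, 11166, 11191, 11265, 11283, 11342, 11409, 11434, 11494, 11519, 11593, 11660, 11694,
   11707, 11718, 11786, 11810, 11878, 11970, 12022, 12082, 12149, 12174, 12241, 12273, 12340,
   12349, 12417, 12490, 12502, 12569, 12582, 12600, 12668, 12726, 12744, 12818, 12885, 12910,
   12984, 13009, 13061, 13085, 13146, 13213, 13226, 13312, 13336, 13388, 13462, 13480, 13554,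
   13579, 13653, 13713, 13729, 13790, 13821, 13857, 13882, 13956, 13981, 14048, 14082, 14155,
   14173, 14247, 14265, 14333, 14346, 14357, 14409, 14445, 14470, 14537, 14562, 14629, 14660,
   14721, 14786, 14804, 14865, 14878, 14938, 14957, 15037, 15055, 15114, 15181, 15206, 15273,
   15298, 15365, 15396, 15432, 15448, 15509, 15522, 15533, 15601, 15632, 15700, 15773, 15825,
   15850, 15917, 15942, 16009, 16027, 16041, 16101, 16153, 16166, 16177, 16245, 16269, 16344,
   16368, 16429, 16469, 16543, 16610, 16635, 16695, 16720, 16794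
  ]

/-- Two digits at circular distance at least two. -/
def far (x y : ℕ) : Bool := Nat.ble 2 ((x + 7 - y) % 7) && Nat.ble ((x + 7 - y) % 7) 5

/-- Two words having far digits in one of their `k` lowest base-7 positions. -/
def sep : ℕ → ℕ → ℕ → Bool
  | 0, _, _ => false
  | k + 1, a, b => far (a % 7) (b % 7) || sep k (a / 7) (b / 7)

def sepAll (a : ℕ) : List ℕ → Bool
  | [] => true
  | b :: l => sep 5 a b && sepAll a l

def check : List ℕ → Bool
  | [] => true
  | a :: l => sepAll a l && check l

theorem check_words : check words = true := by decide +kernel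

theorem length_words : words.length = 367 := by decide +kernel

/-- The vector of digits of a word. -/
def vec (a : ℕ) : Fin 5 → ZMod 7 := fun i => ((a / 7 ^ (i : ℕ) % 7 : ℕ) : ZMod 7)

theorem far_dist : ∀ x < 7, ∀ y < 7, far x y = true →
    2 ≤ circDist 7 ((x : ℕ) : ZMod 7) ((y : ℕ) : ZMod 7) := by
  decide

theorem sep_digit (k : ℕ) : ∀ a b : ℕ, sep k a b = true →
    ∃ i < k, far (a / 7 ^ i % 7) (b / 7 ^ i % 7) = true := by
  induction k with
  | zero => intro a b h; simp [sep] at h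
  | succ k ih =>
    intro a b h
    rw [sep, Bool.or_eq_true] at h
    rcases h with h | h
    · exact ⟨0, by omega, by simpa using h⟩
    · obtain ⟨i, hi, h⟩ := ih _ _ h
      refine ⟨i + 1, by omega, ?_⟩
      rw [Nat.div_div_eq_div_mul, Nat.div_div_eq_div_mul] at h
      rw [pow_succ']
      exact h

theorem sep_dist (a b : ℕ) (h : sep 5 a b = true) :
    ∃ i : Fin 5, 2 ≤ circDist 7 (vec a i) (vec b i) := by
  obtain ⟨i, hi, h⟩ := sep_digit 5 a b h
  exact ⟨⟨i, hi⟩, far_dist _ (Nat.mod_lt _ (by norm_num)) _ (Nat.mod_lt _ (by norm_num)) h⟩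

theorem sepAll_mem (a : ℕ) (l : List ℕ) (h : sepAll a l = true) : ∀ b ∈ l, sep 5 a b = true := by
  induction l with
  | nil => simp
  | cons c l ih =>
    rw [sepAll, Bool.and_eq_true] at h
    intro b hb
    rcases List.mem_cons.1 hb with rfl | hb
    · exact h.1
    · exact ih h.2 b hb

theorem check_pairwise (l : List ℕ) (h : check l = true) :
    l.Pairwise (fun a b => sep 5 a b = true) := by
  induction l with
  | nil => exact List.Pairwise.nil
  | cons c l ih =>
    rw [check, Bool.and_eq_true] at h
    exact List.Pairwise.cons (sepAll_mem c l h.1) (ih h.2)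

theorem circDist_comm (q : ℕ) (x y : ZMod q) : circDist q x y = circDist q y x := min_comm _ _

theorem pairwise_vec : (words.map vec).Pairwise
    (fun u v => ∃ i : Fin 5, 2 ≤ circDist 7 (u i) (v i)) := by
  rw [List.pairwise_map]
  exact (check_pairwise _ check_words).imp (fun h => sep_dist _ _ h)

theorem exists_set : ∃ S : Finset (Fin 5 → ZMod 7), S.card = 367 ∧
      ∀ u ∈ S, ∀ v ∈ S, u ≠ v → ∃ i : Fin 5, 2 ≤ circDist 7 (u i) (v i) := by
  refine ⟨(words.map vec).toFinset, ?_, ?_⟩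
  · rw [List.toFinset_card_of_nodup, List.length_map, length_words]
    refine pairwise_vec.imp ?_
    rintro u v ⟨i, hi⟩ rfl
    simp [circDist] at hi
  · intro u hu v hv huv
    have hsymm : Std.Symm (fun u v : Fin 5 → ZMod 7 =>
        ∃ i : Fin 5, 2 ≤ circDist 7 (u i) (v i)) :=
      ⟨fun u v ⟨i, hi⟩ => ⟨i, by rwa [circDist_comm]⟩⟩
    exact pairwise_vec.forall (List.mem_toFinset.1 hu) (List.mem_toFinset.1 hv) huv

theorem alpha_mem_le (n k : ℕ) (hk : k ∈ {k : ℕ | ∃ S : Finset (Fin n → ZMod 7),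
    (∀ u ∈ S, ∀ v ∈ S, u ≠ v → ∃ i : Fin n, 2 ≤ circDist 7 (u i) (v i)) ∧ S.card = k}) :
    k ≤ 7 ^ n := by
  obtain ⟨S, -, rfl⟩ := hk
  refine (Finset.card_le_univ S).trans ?_
  simp [ZMod.card]

theorem alpha_le (n : ℕ) : circAlpha 7 2 n ≤ 7 ^ n :=
  csSup_le ⟨0, ∅, by simp⟩ (alpha_mem_le n)

theorem le_alpha : 367 ≤ circAlpha 7 2 5 := by
  obtain ⟨S, hS, h⟩ := exists_set
  exact le_csSup ⟨7 ^ 5, alpha_mem_le 5⟩ ⟨S, h, hS⟩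

theorem bdd : BddAbove (Set.range fun n : ℕ =>
    (circAlpha 7 2 (n + 1) : ℝ) ^ (((n : ℝ) + 1)⁻¹)) := by
  refine ⟨7, ?_⟩
  rintro _ ⟨n, rfl⟩
  have h : (circAlpha 7 2 (n + 1) : ℝ) ≤ 7 ^ (n + 1) := by exact_mod_cast alpha_le (n + 1)
  refine (Real.rpow_le_rpow (by positivity) h (by positivity)).trans (le_of_eq ?_)
  have := Real.pow_rpow_inv_natCast (x := 7) (by norm_num) (Nat.succ_ne_zero n)
  simpa using this

theorem theta : (367 : ℝ) ^ ((5 : ℝ)⁻¹) ≤ circTheta 7 2 := by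
  refine le_trans ?_ (le_ciSup bdd 4)
  have h : (367 : ℝ) ≤ circAlpha 7 2 5 := by exact_mod_cast le_alpha
  have e : (((4 : ℕ) : ℝ) + 1)⁻¹ = (5 : ℝ)⁻¹ := by norm_num
  rw [e]
  exact Real.rpow_le_rpow (by norm_num) h (by norm_num)

end C7

/-- `α(C₇^{⊠5}) ≥ 367`: there is an independent set of cardinality 367 in the fifth
strong product power of the 7-cycle `C₇ = C_{2,7}`; consequently
`Θ(C₇) ≥ 367^{1/5}`. -/
theorem shannon_capacity_C7_lower_bound :
    (∃ S : Finset (Fin 5 → ZMod 7), S.card = 367 ∧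
      ∀ u ∈ S, ∀ v ∈ S, u ≠ v → ∃ i : Fin 5, 2 ≤ circDist 7 (u i) (v i))
    ∧ (367 : ℝ) ^ ((5 : ℝ)⁻¹) ≤ circTheta 7 2 :=
  ⟨C7.exists_set, C7.theta⟩
end

section
/- For every integer r ≥ 3, the supremum of Θ(C_{d,q}) over all pairs of positive integers (q,d) with q ≥ 2d and q/d < r equals r. Consequently, since Θ(C_{d,q}) depends only on q/d, is nondecreasing in q/d, and equals r when q/d = r, the function q/d ↦ Θ(C_{d,q}) is continuous at every integer point q/d = r ≥ 3. -/
lemma chain_aux (r N t : ℤ) (n : ℕ) (hr : 3 ≤ r)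
    (hN : (r - 1) * N = (r - 2) * r ^ (n + 1) + 1) (hN0 : 0 < N) (ht : 0 < t) (htN : r * t ≤ N)
    (h : ∀ i < n + 1, ∃ e : ℤ, r * |t * r ^ i - N * e| ≤ N) : False := by
  have hcop : IsCoprime N r := by
    refine ⟨r - 1, -((r - 2) * r ^ n), ?_⟩
    rw [hN]; ring
  have htlt : t < N := by nlinarith
  have hne : ∀ (i : ℕ) (e : ℤ), t * r ^ i - N * e ≠ 0 := by
    intro i e h0
    have h1 : N ∣ t * r ^ i := ⟨e, by linarith⟩
    have h2 : N ∣ t := (hcop.pow_right (n := i)).dvd_of_dvd_mul_right h1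
    have := Int.le_of_dvd ht h2
    linarith
  have key : ∀ i < n + 1, ∃ x E k : ℤ, x = t * r ^ i - N * E ∧ r * |x| ≤ N ∧
      ((0 < x ∧ E = (r - 1) * k) ∨ (x < 0 ∧ E = (r - 1) * k + 1)) := by
    intro i
    induction i with
    | zero =>
      intro _
      refine ⟨t, 0, 0, by simp, by rwa [abs_of_pos ht], Or.inl ⟨ht, by simp⟩⟩
    | succ i ih =>
      intro hi
      obtain ⟨x, E, k, hx, hxN, hc⟩ := ih (by omega)
      obtain ⟨e, he⟩ := h (i + 1) hi
      have hx0 := hne (i + 1) e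
      set y := t * r ^ (i + 1) - N * e with hy
      have hyx : y = r * x - N * (e - r * E) := by rw [hy, hx]; ring
      obtain ⟨f, hf⟩ : ∃ f, f = e - r * E := ⟨_, rfl⟩
      rw [← hf] at hyx
      have hef : e = r * E + f := by linarith
      have hy1 : r * y ≤ N := le_trans (by gcongr; exact le_abs_self y) he
      have hy2 : -N ≤ r * y := by
        have := neg_abs_le y
        nlinarith
      have hx1 : r * x ≤ N := le_trans (by gcongr; exact le_abs_self x) hxN
      have hx2 : -N ≤ r * x := by
        have := neg_abs_le x
        nlinarith
      have hy3 : y < N := by nlinarith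
      have hy4 : -N < y := by nlinarith
      have hf1 : f < 2 := by
        by_contra hcon
        push Not at hcon
        nlinarith
      have hf2 : -2 < f := by
        by_contra hcon
        push Not at hcon
        nlinarith
      refine ⟨y, e, ?_⟩
      rcases hc with ⟨hxp, hE⟩ | ⟨hxn, hE⟩
      · have hrx : 0 < r * x := by positivity
        have hf3 : f = 0 ∨ f = 1 := by
          rcases (by omega : f = -1 ∨ f = 0 ∨ f = 1) with h' | h' | h'
          · subst h'; exfalso; linarith
          · exact Or.inl h'
          · exact Or.inr h'
        rcases hf3 with h' | h'
        · refine ⟨r * k, hy, he, Or.inl ⟨by rw [hyx, h']; linarith, by rw [hef, hE, h']; ring⟩⟩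
        · refine ⟨r * k, hy, he, Or.inr ⟨?_, by rw [hef, hE, h']; ring⟩⟩
          refine lt_of_le_of_ne ?_ hx0
          rw [hyx, h']; linarith
      · have hrx : r * x < 0 := by nlinarith
        have hf3 : f = 0 ∨ f = -1 := by
          rcases (by omega : f = -1 ∨ f = 0 ∨ f = 1) with h' | h' | h'
          · exact Or.inr h'
          · exact Or.inl h'
          · subst h'; exfalso; linarith
        rcases hf3 with h' | h'
        · refine ⟨r * k + 1, hy, he,
            Or.inr ⟨by rw [hyx, h']; linarith, by rw [hef, hE, h']; ring⟩⟩
        · refine ⟨r * k + 1, hy, he, Or.inl ⟨?_, by rw [hef, hE, h']; ring⟩⟩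
          refine lt_of_le_of_ne ?_ (Ne.symm hx0)
          rw [hyx, h']; linarith
  obtain ⟨x, E, k, hx, hxN, hc⟩ := key n (by omega)
  have hx1 : r * x ≤ N := le_trans (by gcongr; exact le_abs_self x) hxN
  have hx2 : -N ≤ r * x := by
    have := neg_abs_le x
    nlinarith
  have main : (r - 2) * (r * x) + t = N * ((r - 1) * t - (r - 2) * (r * E)) := by
    rw [hx]
    have : t * ((r - 1) * N) = t * ((r - 2) * r ^ (n + 1) + 1) := by rw [hN]
    linear_combination -this
  rcases hc with ⟨hxp, hE⟩ | ⟨hxn, hE⟩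
  · have hj : (r - 1) * t - (r - 2) * (r * E) = (r - 1) * (t - (r - 2) * r * k) := by
      rw [hE]; ring
    rw [hj] at main
    obtain ⟨m, hm⟩ : ∃ m, m = t - (r - 2) * r * k := ⟨_, rfl⟩
    rw [← hm] at main
    have hpos : 0 < r * x := by positivity
    have h1 : (r - 2) * (r * x) ≤ (r - 2) * N := by
      apply mul_le_mul_of_nonneg_left hx1; linarith
    have h2 : 0 < (r - 2) * (r * x) := by
      apply mul_pos _ hpos; linarith
    have hm0 : 0 < m := by
      have : 0 < (N * (r - 1)) * m := by nlinarith
      exact (mul_pos_iff_of_pos_left (by nlinarith)).mp this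
    have h3 : N * (r - 1) * 1 ≤ N * (r - 1) * m := by
      apply mul_le_mul_of_nonneg_left (by linarith); nlinarith
    nlinarith
  · have hj : (r - 1) * t - (r - 2) * (r * E) = (r - 1) * (t - (r - 2) * r * k - r + 1) + 1 := by
      rw [hE]; ring
    rw [hj] at main
    obtain ⟨m, hm⟩ : ∃ m, m = t - (r - 2) * r * k - r + 1 := ⟨_, rfl⟩
    rw [← hm] at main
    have hneg : r * x < 0 := by nlinarith
    have h1 : (r - 2) * (-N) ≤ (r - 2) * (r * x) := by
      apply mul_le_mul_of_nonneg_left hx2; linarith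
    have h2 : (r - 2) * (r * x) < 0 := by
      apply mul_neg_of_pos_of_neg _ hneg; linarith
    have hNr : 0 < N * (r - 1) := by nlinarith
    rcases lt_or_ge m 0 with hm0 | hm0
    · have h3 : N * (r - 1) * m ≤ N * (r - 1) * (-1) := by
        apply mul_le_mul_of_nonneg_left (by linarith) hNr.le
      nlinarith
    · have h3 : 0 ≤ N * (r - 1) * m := by positivity
      nlinarith

lemma chain_sep (r N t : ℤ) (n : ℕ) (hr : 3 ≤ r)
    (hN : (r - 1) * N = (r - 2) * r ^ (n + 1) + 1) (hN0 : 0 < N) (ht : ¬ N ∣ t) :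
    ∃ i < n + 1, ∀ e : ℤ, N < r * |t * r ^ i - N * e| := by
  by_contra hcon
  push Not at hcon
  obtain ⟨e0, he0⟩ := hcon 0 (by omega)
  simp only [pow_zero, mul_one] at he0
  have hne : t - N * e0 ≠ 0 := fun h0 => ht ⟨e0, by linarith⟩
  rcases lt_or_gt_of_ne hne with hlt | hgt
  · refine chain_aux r N (-(t - N * e0)) n hr hN hN0 (by linarith)
      (by rwa [abs_of_neg hlt] at he0) ?_
    intro i hi
    obtain ⟨e, he⟩ := hcon i hi
    refine ⟨-(e - e0 * r ^ i), ?_⟩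
    rw [← abs_neg] at he
    have e1 : -(t - N * e0) * r ^ i - N * -(e - e0 * r ^ i) = -(t * r ^ i - N * e) := by ring
    rwa [e1]
  · refine chain_aux r N (t - N * e0) n hr hN hN0 hgt
      (by rwa [abs_of_pos hgt] at he0) ?_
    intro i hi
    obtain ⟨e, he⟩ := hcon i hi
    refine ⟨e - e0 * r ^ i, ?_⟩
    have e1 : (t - N * e0) * r ^ i - N * (e - e0 * r ^ i) = t * r ^ i - N * e := by ring
    rwa [e1]

lemma card_upper (q d n : ℕ) (hd : 0 < d) (hq : d ≤ q) (S : Finset (Fin n → ZMod q))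
    (hS : ∀ u ∈ S, ∀ v ∈ S, u ≠ v → ∃ i : Fin n, d ≤ circDist q (u i) (v i)) :
    S.card * d ^ n ≤ q ^ n := by
  haveI : NeZero q := ⟨by omega⟩
  have hinj : Function.Injective
      (fun p : S × (Fin n → Fin d) => (fun i => p.1.1 i + ((p.2 i : ℕ) : ZMod q))) := by
    rintro ⟨⟨u, hu⟩, a⟩ ⟨⟨v, hv⟩, b⟩ hab
    have hab' : ∀ i, u i + ((a i : ℕ) : ZMod q) = v i + ((b i : ℕ) : ZMod q) :=
      fun i => congrFun hab i
    have huv : u = v := by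
      by_contra hne
      obtain ⟨i, hi⟩ := hS u hu v hv hne
      have h1 := hab' i
      unfold circDist at hi
      have hi1 := le_min_iff.mp hi
      rcases le_total (a i : ℕ) (b i : ℕ) with hle | hle
      · have : u i - v i = (((b i : ℕ) - (a i : ℕ) : ℕ) : ZMod q) := by
          rw [Nat.cast_sub hle]; linear_combination h1
        have h2 := hi1.1
        rw [this, ZMod.val_natCast_of_lt (by have := (b i).2; omega)] at h2
        have := (b i).2; omega
      · have : v i - u i = (((a i : ℕ) - (b i : ℕ) : ℕ) : ZMod q) := by
          rw [Nat.cast_sub hle]; linear_combination -h1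
        have h2 := hi1.2
        rw [this, ZMod.val_natCast_of_lt (by have := (a i).2; omega)] at h2
        have := (a i).2; omega
    subst huv
    have : a = b := by
      funext i
      have h1 := add_left_cancel (hab' i)
      have h2 := congrArg ZMod.val h1
      rw [ZMod.val_natCast_of_lt (by have := (a i).2; omega),
        ZMod.val_natCast_of_lt (by have := (b i).2; omega)] at h2
      exact Fin.ext h2
    subst this
    rfl
  have := Fintype.card_le_of_injective _ hinj
  simpa [ZMod.card] using this

lemma alpha_bdd (q d n : ℕ) (hd : 0 < d) (hq : d ≤ q) :
    BddAbove {k : ℕ | ∃ S : Finset (Fin n → ZMod q),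
    (∀ u ∈ S, ∀ v ∈ S, u ≠ v → ∃ i : Fin n, d ≤ circDist q (u i) (v i)) ∧ S.card = k} := by
  refine ⟨q ^ n, ?_⟩
  rintro k ⟨S, hS, rfl⟩
  have h1 := card_upper q d n hd hq S hS
  have : 0 < d ^ n := by positivity
  nlinarith

lemma alpha_le (q d n : ℕ) (hd : 0 < d) (hq : d ≤ q) :
    (circAlpha q d n : ℝ) ≤ ((q : ℝ) / d) ^ n := by
  have hmem : circAlpha q d n ∈ {k : ℕ | ∃ S : Finset (Fin n → ZMod q),
    (∀ u ∈ S, ∀ v ∈ S, u ≠ v → ∃ i : Fin n, d ≤ circDist q (u i) (v i)) ∧ S.card = k} :=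
    Nat.sSup_mem ⟨0, ∅, by simp, by simp⟩ (alpha_bdd q d n hd hq)
  obtain ⟨S, hS, hk⟩ := hmem
  have h1 := card_upper q d n hd hq S hS
  rw [hk] at h1
  rw [div_pow, le_div_iff₀ (by positivity)]
  exact_mod_cast h1

lemma theta_term_le (q d : ℕ) (hd : 0 < d) (hq : d ≤ q) (n : ℕ) :
    (circAlpha q d (n + 1) : ℝ) ^ (((n : ℝ) + 1)⁻¹) ≤ (q : ℝ) / d := by
  have h := alpha_le q d (n + 1) hd hq
  calc (circAlpha q d (n + 1) : ℝ) ^ (((n : ℝ) + 1)⁻¹)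
      ≤ (((q : ℝ) / d) ^ (n + 1)) ^ (((n : ℝ) + 1)⁻¹) :=
        Real.rpow_le_rpow (by positivity) h (by positivity)
    _ = (q : ℝ) / d := by
        have := Real.pow_rpow_inv_natCast (x := (q : ℝ) / d) (n := n + 1) (by positivity) (by omega)
        push_cast at this
        exact this

lemma theta_le (q d : ℕ) (hd : 0 < d) (hq : d ≤ q) : circTheta q d ≤ (q : ℝ) / d :=
  ciSup_le (theta_term_le q d hd hq)

lemma le_theta (q d : ℕ) (hd : 0 < d) (hq : d ≤ q) (n : ℕ) :
    (circAlpha q d (n + 1) : ℝ) ^ (((n : ℝ) + 1)⁻¹) ≤ circTheta q d :=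
  le_ciSup (f := fun n : ℕ => (circAlpha q d (n + 1) : ℝ) ^ (((n : ℝ) + 1)⁻¹))
    ⟨(q : ℝ) / d, by rintro _ ⟨m, rfl⟩; exact theta_term_le q d hd hq m⟩ n

lemma circDist_comm' (q : ℕ) (x y : ZMod q) : circDist q x y = circDist q y x := by
  unfold circDist; exact min_comm _ _

lemma floor_sep (q d r N A B : ℕ) (hd : 0 < d) (hN : 0 < N) (hA : A < N) (hBA : B ≤ A)
    (hq : d * (r * N) ≤ q * (N + 1)) (h1 : N < r * (A - B)) (h2 : N < r * (N - (A - B))) :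
    d ≤ circDist q ((q * A / N : ℕ) : ZMod q) ((q * B / N : ℕ) : ZMod q) := by
  have hr0 : 0 < r := by
    rcases Nat.eq_zero_or_pos r with h | h
    · subst h; omega
    · exact h
  have aux : ∀ m : ℕ, N < r * m → d * N ≤ q * m := by
    intro m hm
    have e1 : q * (N + 1) ≤ q * (r * m) := Nat.mul_le_mul_left q hm
    have e2 : r * (d * N) ≤ r * (q * m) := by nlinarith
    exact Nat.le_of_mul_le_mul_left e2 hr0
  have a1 := aux _ h1
  have a2 := aux _ h2
  have b1 : q * B + N * d ≤ q * A := by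
    have : q * A = q * B + q * (A - B) := by rw [← mul_add]; congr 1; omega
    nlinarith
  have b2 : q * A + N * d ≤ q * B + N * q := by
    have : q * B + N * q = q * A + q * (N - (A - B)) := by
      rw [mul_comm N q, ← mul_add, ← mul_add]; congr 1; omega
    nlinarith
  have c1 := Nat.div_le_div_right (c := N) b1
  have c2 := Nat.div_le_div_right (c := N) b2
  rw [Nat.add_mul_div_left _ _ hN] at c1
  rw [Nat.add_mul_div_left _ _ hN, Nat.add_mul_div_left _ _ hN] at c2
  have hq0 : 0 < q := by
    rcases Nat.eq_zero_or_pos q with h | h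
    · subst h
      have : 0 < d * N := by positivity
      omega
    · exact h
  have hP : q * A / N < q := by
    rw [Nat.div_lt_iff_lt_mul hN]; nlinarith
  generalize q * A / N = P at *
  generalize q * B / N = Q at *
  haveI : NeZero q := ⟨by omega⟩
  have e1 : ((P : ZMod q) - (Q : ZMod q)) = ((P - Q : ℕ) : ZMod q) := by
    rw [Nat.cast_sub (by omega)]
  have e2 : ((Q : ZMod q) - (P : ZMod q)) = ((q - (P - Q) : ℕ) : ZMod q) := by
    rw [Nat.cast_sub (by omega), Nat.cast_sub (by omega)]; simp
  unfold circDist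
  rw [e1, e2, ZMod.val_natCast_of_lt (by omega), ZMod.val_natCast_of_lt (by omega)]
  apply le_min <;> omega

lemma alpha_ge (q d r N n : ℕ) (hd : 0 < d) (hdq : d ≤ q) (hr : 3 ≤ r) (hN0 : 0 < N)
    (hN : ((r : ℤ) - 1) * N = ((r : ℤ) - 2) * (r : ℤ) ^ (n + 1) + 1)
    (hq : d * (r * N) ≤ q * (N + 1)) : N ≤ circAlpha q d (n + 1) := by
  set f : ℕ → (Fin (n + 1) → ZMod q) :=
    fun t i => ((q * (t * r ^ (i : ℕ) % N) / N : ℕ) : ZMod q) with hf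
  have sep : ∀ s < N, ∀ t < N, s ≠ t → ∃ i : Fin (n + 1), d ≤ circDist q (f s i) (f t i) := by
    intro s hs t ht hst
    have hnd : ¬ (N : ℤ) ∣ ((s : ℤ) - t) := by
      intro hdv
      have := Int.eq_zero_of_abs_lt_dvd hdv (by rw [abs_lt]; constructor <;> omega)
      omega
    obtain ⟨i, hi, hsep⟩ := chain_sep r N ((s : ℤ) - t) n (by exact_mod_cast hr) hN
      (by exact_mod_cast hN0) hnd
    refine ⟨⟨i, hi⟩, ?_⟩
    simp only [hf]
    have hA := Nat.mod_lt (s * r ^ i) hN0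
    have hB := Nat.mod_lt (t * r ^ i) hN0
    have dA := Nat.mod_add_div (s * r ^ i) N
    have dB := Nat.mod_add_div (t * r ^ i) N
    have hAB : ∀ c : ℤ, (N : ℤ) <
        r * |((s * r ^ i % N : ℕ) : ℤ) - ((t * r ^ i % N : ℕ) : ℤ) - N * c| := by
      intro c
      have := hsep (((s * r ^ i / N : ℕ) : ℤ) - ((t * r ^ i / N : ℕ) : ℤ) + c)
      convert this using 3
      have dA' : ((s * r ^ i % N : ℕ) : ℤ) + N * ((s * r ^ i / N : ℕ) : ℤ) = s * r ^ i := by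
        exact_mod_cast dA
      have dB' : ((t * r ^ i % N : ℕ) : ℤ) + N * ((t * r ^ i / N : ℕ) : ℤ) = t * r ^ i := by
        exact_mod_cast dB
      linear_combination dA' - dB'
    clear dA dB
    generalize s * r ^ i % N = A at *
    generalize t * r ^ i % N = B at *
    rcases le_total B A with hle | hle
    · have k1 := hAB 0
      have k2 := hAB 1
      rw [abs_of_nonneg (by omega)] at k1
      rw [abs_of_nonpos (by omega)] at k2
      refine floor_sep q d r N A B hd hN0 hA hle hq ?_ ?_
      · zify [hle]; simpa using k1
      · zify [hle, (by omega : A - B ≤ N)]; convert k2 using 2; ring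
    · rw [circDist_comm']
      have k1 := hAB 0
      have k2 := hAB (-1)
      rw [abs_of_nonpos (by omega)] at k1
      rw [abs_of_nonneg (by omega)] at k2
      refine floor_sep q d r N B A hd hN0 hB hle hq ?_ ?_
      · zify [hle]; convert k1 using 2; ring
      · zify [hle, (by omega : B - A ≤ N)]; convert k2 using 2; ring
  have hself : ∀ x : ZMod q, circDist q x x = 0 := by intro x; simp [circDist]
  have hinj : Set.InjOn f (Finset.range N : Set ℕ) := by
    intro s hs t ht hst
    by_contra hne
    obtain ⟨i, hi⟩ := sep s (by simpa using hs) t (by simpa using ht) hne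
    rw [hst, hself] at hi
    omega
  apply le_csSup (alpha_bdd q d (n + 1) hd hdq)
  refine ⟨(Finset.range N).image f, ?_, ?_⟩
  · intro u hu v hv huv
    obtain ⟨s, hs, rfl⟩ := Finset.mem_image.mp hu
    obtain ⟨t, ht, rfl⟩ := Finset.mem_image.mp hv
    exact sep s (by simpa using hs) t (by simpa using ht) (fun h => huv (by rw [h]))
  · rw [Finset.card_image_of_injOn hinj, Finset.card_range]

lemma exists_N (r n : ℕ) (hr : 3 ≤ r) : ∃ N : ℕ, 0 < N ∧
    ((r : ℤ) - 1) * N = ((r : ℤ) - 2) * (r : ℤ) ^ n + 1 ∧ r ^ n ≤ 2 * N := by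
  have h : ∃ N : ℕ, 0 < N ∧ ((r : ℤ) - 1) * N = ((r : ℤ) - 2) * (r : ℤ) ^ n + 1 := by
    induction n with
    | zero => exact ⟨1, by norm_num, by push_cast; ring⟩
    | succ n ih =>
      obtain ⟨N, hN0, hN⟩ := ih
      have : 1 ≤ r * N := Nat.one_le_iff_ne_zero.mpr (by positivity)
      refine ⟨r * N - 1, ?_, ?_⟩
      · have : 3 * 1 ≤ r * N := Nat.mul_le_mul hr hN0
        omega
      · rw [Nat.cast_sub this]
        push_cast
        linear_combination (r : ℤ) * hN
  obtain ⟨N, hN0, hN⟩ := h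
  refine ⟨N, hN0, hN, ?_⟩
  have hr' : (3 : ℤ) ≤ r := by exact_mod_cast hr
  have hp : (0 : ℤ) < (r : ℤ) ^ n := by positivity
  zify
  by_contra hcon
  push Not at hcon
  nlinarith

lemma theta_lower (r : ℕ) (hr : 3 ≤ r) (ε : ℝ) (hε : 0 < ε) : ∃ δ : ℝ, 0 < δ ∧
    ∀ q d : ℕ, 0 < d → 2 * d ≤ q → (r : ℝ) - δ ≤ (q : ℝ) / d → (r : ℝ) - ε < circTheta q d := by
  have hr' : (3 : ℝ) ≤ r := by exact_mod_cast hr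
  obtain ⟨ρ, hρ0, hρ1, hρ2⟩ : ∃ ρ : ℝ, 0 < ρ ∧ ρ < r ∧ (r : ℝ) - ε ≤ ρ := by
    refine ⟨max 1 (r - ε), by positivity, max_lt (by linarith) (by linarith), le_max_right _ _⟩
  obtain ⟨n, hn⟩ := exists_pow_lt_of_lt_one (show (0 : ℝ) < 1 / 2 by norm_num)
    (show ρ / r < 1 by rw [div_lt_one (by linarith)]; exact hρ1)
  have hn1 : (ρ / r) ^ (n + 1) < 1 / 2 := by
    refine lt_of_le_of_lt ?_ hn
    apply pow_le_pow_of_le_one (by positivity) _ (by omega)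
    rw [div_le_one (by linarith)]; exact hρ1.le
  obtain ⟨N, hN0, hN, hN2⟩ := exists_N r (n + 1) hr
  have hNr : (0 : ℝ) < N := by exact_mod_cast hN0
  refine ⟨r / (N + 1), by positivity, ?_⟩
  intro q d hd hdq hqd
  have hd' : (0 : ℝ) < d := by exact_mod_cast hd
  have hq : d * (r * N) ≤ q * (N + 1) := by
    have h1 : (r : ℝ) - r / (N + 1) = r * N / (N + 1) := by field_simp; ring
    rw [h1, div_le_div_iff₀ (by positivity) hd'] at hqd
    have : (d : ℝ) * (r * N) ≤ q * (N + 1) := by linarith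
    exact_mod_cast this
  have hα := alpha_ge q d r N n hd (by omega) hr hN0 hN hq
  have hlt : ρ ^ (n + 1) < (circAlpha q d (n + 1) : ℝ) := by
    have h1 : ρ ^ (n + 1) < r ^ (n + 1) / 2 := by
      rw [div_pow, div_lt_iff₀ (by positivity)] at hn1
      linarith
    have h2 : (r : ℝ) ^ (n + 1) ≤ 2 * N := by exact_mod_cast hN2
    have h3 : (N : ℝ) ≤ circAlpha q d (n + 1) := by exact_mod_cast hα
    linarith
  refine lt_of_le_of_lt hρ2 (lt_of_lt_of_le ?_ (le_theta q d hd (by omega) n))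
  have h4 := Real.rpow_lt_rpow (z := ((n : ℝ) + 1)⁻¹) (by positivity) hlt (by positivity)
  have h5 := Real.pow_rpow_inv_natCast (x := ρ) (n := n + 1) hρ0.le (by omega)
  push_cast at h5
  rwa [h5] at h4

/-- For every integer `r ≥ 3`, the supremum of `Θ(C_{d,q})` over all pairs of
positive integers `(q,d)` with `q ≥ 2d` and `q/d < r` equals `r`; consequently the
function `q/d ↦ Θ(C_{d,q})` is continuous at the integer point `q/d = r`. -/
theorem theta_continuous_at_integers (r : ℕ) (hr : 3 ≤ r) :
    (sSup {x : ℝ | ∃ q d : ℕ, 0 < d ∧ 2 * d ≤ q ∧ q < r * d ∧ x = circTheta q d}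
      = (r : ℝ))
    ∧ ∀ ε : ℝ, 0 < ε → ∃ δ : ℝ, 0 < δ ∧ ∀ q d : ℕ, 0 < d → 2 * d ≤ q →
        |(q : ℝ) / (d : ℝ) - (r : ℝ)| < δ → |circTheta q d - (r : ℝ)| < ε := by
  constructor
  · apply csSup_eq_of_forall_le_of_forall_lt_exists_gt
    · exact ⟨_, 2, 1, by norm_num, by norm_num, by omega, rfl⟩
    · rintro x ⟨q, d, hd, h2, hlt, rfl⟩
      refine (theta_le q d hd (by omega)).trans ?_
      have hd' : (0 : ℝ) < d := by exact_mod_cast hd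
      rw [div_le_iff₀ hd']
      exact_mod_cast hlt.le
    · intro w hw
      obtain ⟨δ, hδ, h⟩ := theta_lower r hr (r - w) (by linarith)
      obtain ⟨m, hm⟩ := exists_nat_one_div_lt hδ
      have hle : 3 * (m + 1) ≤ r * (m + 1) := Nat.mul_le_mul_right _ hr
      refine ⟨_, ⟨r * (m + 1) - 1, m + 1, by omega, by omega, by omega, rfl⟩, ?_⟩
      have := h (r * (m + 1) - 1) (m + 1) (by omega) (by omega) ?_
      · linarith
      · rw [Nat.cast_sub (by omega)]
        push_cast
        have : ((r : ℝ) * (m + 1) - 1) / (m + 1) = r - 1 / (m + 1) := by field_simp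
        rw [this]; linarith
  · intro ε hε
    obtain ⟨δ, hδ, h⟩ := theta_lower r hr ε hε
    refine ⟨min δ ε, lt_min hδ hε, ?_⟩
    intro q d hd h2 hlt
    rw [abs_lt] at hlt ⊢
    have h3 := min_le_left δ ε
    have h4 := min_le_right δ ε
    have h5 := theta_le q d hd (by omega)
    have h6 := h q d hd h2 (by linarith [hlt.1])
    constructor
    · linarith
    · linarith [hlt.2]
end
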